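/- Let n ≥ 2 and suppose Λ is a critical lattice of the unit ball B^n which is unique up to rotation, i.e., every critical lattice of B^n equals UΛ for some orthogonal map U, and suppose the configuration S(Λ) is redundantly semi-eutactic. Then B^n is not a local pessimum for lattice packing: for every ε > 0 there exists an origin-symmetric convex body K with Hausdorff distance δ_H(K, B^n) < ε and φ(K) < φ(B^n). -/

import Mathlib

open scoped RealInnerProductSpace
open Metric MeasureTheory

noncomputable section

abbrev Euc (n : ℕ) := EuclideanSpace ℝ (Fin n)

/-- The rank-one symmetric map `P_x : y ↦ ⟪y, x⟫ • x`. -/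
def projMap {F : Type*} [NormedAddCommGroup F] [InnerProductSpace ℝ F] (x : F) :
    F →ₗ[ℝ] F where
  toFun y := (⟪y, x⟫) • x
  map_add' y z := by simp [inner_add_left, add_smul]
  map_smul' c y := by simp [real_inner_smul_left, mul_smul]

/-- A configuration is perfect if the maps `P_x`, `x ∈ S`, span the symmetric maps. -/
def IsPerfectCfg {F : Type*} [NormedAddCommGroup F] [InnerProductSpace ℝ F]
    (S : Set F) : Prop :=
  ∀ T : F →ₗ[ℝ] F, T.IsSymmetric → T ∈ Submodule.span ℝ (projMap '' S)

/-- A configuration is eutactic if `Id = Σ_{x∈S} υ_x P_x` with `υ_x > 0`, `υ_x = υ_{-x}`. -/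
def IsEutacticCfg {F : Type*} [NormedAddCommGroup F] [InnerProductSpace ℝ F]
    (S : Set F) : Prop :=
  ∃ υ : F → ℝ, (∀ x ∈ S, 0 < υ x) ∧ (∀ x ∉ S, υ x = 0) ∧
    (Function.support υ).Finite ∧ (∀ x, υ x = υ (-x)) ∧
    ∑ᶠ x, υ x • projMap x = (LinearMap.id : F →ₗ[ℝ] F)

/-- A configuration is semi-eutactic if `Id = Σ_{x∈S} υ_x P_x` with `υ_x ≥ 0`, `υ_x = υ_{-x}`. -/
def IsSemiEutacticCfg {F : Type*} [NormedAddCommGroup F] [InnerProductSpace ℝ F]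
    (S : Set F) : Prop :=
  ∃ υ : F → ℝ, (∀ x ∈ S, 0 ≤ υ x) ∧ (∀ x ∉ S, υ x = 0) ∧
    (Function.support υ).Finite ∧ (∀ x, υ x = υ (-x)) ∧
    ∑ᶠ x, υ x • projMap x = (LinearMap.id : F →ₗ[ℝ] F)

/-- A configuration is extreme if it is perfect and eutactic. -/
def IsExtremeCfg {F : Type*} [NormedAddCommGroup F] [InnerProductSpace ℝ F]
    (S : Set F) : Prop :=
  IsPerfectCfg S ∧ IsEutacticCfg S

/-- Hilbert–Schmidt (Frobenius) norm of a linear map on `ℝ^n`. -/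
def frobNorm {n : ℕ} (T : Euc n →ₗ[ℝ] Euc n) : ℝ :=
  Real.sqrt (∑ j, ∑ i, (T (EuclideanSpace.single j 1) i) ^ 2)

/-- The lattice `T ℤ^n` as a set of points. -/
def latticeSet {n : ℕ} (T : Euc n →ₗ[ℝ] Euc n) : Set (Euc n) :=
  {v | ∃ z : Fin n → ℤ, v = T (∑ i, (z i : ℝ) • EuclideanSpace.single i 1)}

/-- A set is an (n-dimensional) lattice if it is `T ℤ^n` for an invertible `T`. -/
def IsLattice {n : ℕ} (Λ : Set (Euc n)) : Prop :=
  ∃ T : Euc n →ₗ[ℝ] Euc n, LinearMap.det T ≠ 0 ∧ Λ = latticeSet T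

/-- The determinant `d(Λ) = |det T|` of a lattice. -/
def latDet {n : ℕ} (Λ : Set (Euc n)) : ℝ :=
  sInf {d | ∃ T : Euc n →ₗ[ℝ] Euc n, Λ = latticeSet T ∧ d = |LinearMap.det T|}

/-- The metric `δ(Λ, Λ') = inf ‖T - T'‖` on the space of lattices. -/
def latDist {n : ℕ} (Λ Λ' : Set (Euc n)) : ℝ :=
  sInf {d | ∃ T T' : Euc n →ₗ[ℝ] Euc n,
    Λ = latticeSet T ∧ Λ' = latticeSet T' ∧ d = frobNorm (T - T')}

/-- The minimal norm `m(Λ)`. -/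
def minNorm {n : ℕ} (Λ : Set (Euc n)) : ℝ :=
  sInf {r | ∃ x ∈ Λ, x ≠ 0 ∧ r = ‖x‖ ^ 2}

/-- The set `S(Λ)` of minimal vectors of a lattice. -/
def minVecs {n : ℕ} (Λ : Set (Euc n)) : Set (Euc n) :=
  {x | x ∈ Λ ∧ x ≠ 0 ∧ ‖x‖ ^ 2 = minNorm Λ}

/-- An origin-symmetric convex body. -/
structure IsSymCB {n : ℕ} (K : Set (Euc n)) : Prop where
  convex : Convex ℝ K
  compact : IsCompact K
  nonempty_interior : (interior K).Nonempty
  symm : -K = K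

/-- A lattice is admissible for a body if it meets the interior only at the origin. -/
def IsAdmissible {n : ℕ} (Λ K : Set (Euc n)) : Prop :=
  Λ ∩ interior K ⊆ {0}

/-- The critical determinant `d_K`. -/
def critDet {n : ℕ} (K : Set (Euc n)) : ℝ :=
  sInf {d | ∃ Λ : Set (Euc n), IsLattice Λ ∧ IsAdmissible Λ K ∧ d = latDet Λ}

/-- A critical lattice of `K`: an admissible lattice attaining the critical determinant. -/
def IsCriticalLattice {n : ℕ} (Λ K : Set (Euc n)) : Prop :=
  IsLattice Λ ∧ IsAdmissible Λ K ∧ latDet Λ = critDet K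

/-- The optimal lattice packing fraction `φ(K) = 2⁻ⁿ vol(K) / d_K`. -/
def packFrac {n : ℕ} (K : Set (Euc n)) : ℝ :=
  (volume K).toReal / (2 ^ n * critDet K)

/-- The closed unit ball `Bⁿ`. -/
def unitBall (n : ℕ) : Set (Euc n) := Metric.closedBall 0 1

/-- The support function of a body. -/
def suppFn {n : ℕ} (K : Set (Euc n)) (x : Euc n) : ℝ :=
  sSup ((fun y => ⟪x, y⟫) '' K)

/-- The radial function of a body. -/
def radFn {n : ℕ} (K : Set (Euc n)) (x : Euc n) : ℝ :=
  sSup {t : ℝ | 0 ≤ t ∧ t • x ∈ K}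

/-- A vector with integer coordinates. -/
def IsIntVec {n : ℕ} (w : Euc n) : Prop := ∀ i, ∃ k : ℤ, w i = k

theorem sum_single_apply {n : ℕ} (c : Fin n → ℝ) (j : Fin n) :
    (∑ i, c i • (EuclideanSpace.single i (1 : ℝ) : Euc n)) j = c j := by
  simp [Pi.single_apply]

theorem sum_single_eq {n : ℕ} (x : Euc n) :
    ∑ i, x i • (EuclideanSpace.single i (1 : ℝ) : Euc n) = x := by
  ext j
  rw [sum_single_apply]

theorem mem_latticeSet_iff {n : ℕ} (T : Euc n →ₗ[ℝ] Euc n) (v : Euc n) :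
    v ∈ latticeSet T ↔ ∃ w, IsIntVec w ∧ T w = v := by
  constructor
  · rintro ⟨z, rfl⟩
    exact ⟨_, fun i => ⟨z i, sum_single_apply _ i⟩, rfl⟩
  · rintro ⟨w, hw, rfl⟩
    choose z hz using hw
    refine ⟨z, ?_⟩
    congr 1
    rw [← sum_single_eq w]
    simp only [hz]

theorem IsIntVec.single {n : ℕ} (i : Fin n) : IsIntVec (EuclideanSpace.single i (1 : ℝ) : Euc n) := by
  intro j
  by_cases h : j = i
  · exact ⟨1, by simp [h]⟩
  · exact ⟨0, by simp [h]⟩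

theorem IsIntVec.sub {n : ℕ} {v w : Euc n} (hv : IsIntVec v) (hw : IsIntVec w) :
    IsIntVec (v - w) := by
  intro i
  obtain ⟨a, ha⟩ := hv i
  obtain ⟨b, hb⟩ := hw i
  exact ⟨a - b, by simp [ha, hb]⟩

theorem latticeSet_comp {n : ℕ} (A T : Euc n →ₗ[ℝ] Euc n) :
    latticeSet (A ∘ₗ T) = A '' latticeSet T := by
  ext v
  simp only [mem_latticeSet_iff, Set.mem_image]
  constructor
  · rintro ⟨w, hw, rfl⟩
    exact ⟨T w, ⟨w, hw, rfl⟩, rfl⟩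
  · rintro ⟨_, ⟨w, hw, rfl⟩, rfl⟩
    exact ⟨w, hw, rfl⟩

theorem sub_mem_latticeSet {n : ℕ} (T : Euc n →ₗ[ℝ] Euc n) {v w : Euc n}
    (hv : v ∈ latticeSet T) (hw : w ∈ latticeSet T) : v - w ∈ latticeSet T := by
  rw [mem_latticeSet_iff] at *
  obtain ⟨a, ha, rfl⟩ := hv
  obtain ⟨b, hb, rfl⟩ := hw
  exact ⟨a - b, ha.sub hb, map_sub _ _ _⟩

theorem zero_mem_latticeSet {n : ℕ} (T : Euc n →ₗ[ℝ] Euc n) : (0 : Euc n) ∈ latticeSet T :=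
  (mem_latticeSet_iff _ _).2 ⟨0, fun i => ⟨0, by simp⟩, by simp⟩

theorem neg_mem_latticeSet {n : ℕ} (T : Euc n →ₗ[ℝ] Euc n) {v : Euc n}
    (hv : v ∈ latticeSet T) : -v ∈ latticeSet T := by
  simpa using sub_mem_latticeSet T (zero_mem_latticeSet T) hv

theorem add_mem_latticeSet {n : ℕ} (T : Euc n →ₗ[ℝ] Euc n) {v w : Euc n}
    (hv : v ∈ latticeSet T) (hw : w ∈ latticeSet T) : v + w ∈ latticeSet T := by
  simpa using sub_mem_latticeSet T hv (neg_mem_latticeSet T hw)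

theorem map_intVec_mem {n : ℕ} (T M : Euc n →ₗ[ℝ] Euc n)
    (hM : ∀ i, M (EuclideanSpace.single i 1) ∈ latticeSet T) {w : Euc n} (hw : IsIntVec w) :
    M w ∈ latticeSet T := by
  let G : AddSubgroup (Euc n) :=
    { carrier := latticeSet T
      zero_mem' := zero_mem_latticeSet T
      add_mem' := fun h1 h2 => add_mem_latticeSet T h1 h2
      neg_mem' := fun h => neg_mem_latticeSet T h }
  change M w ∈ G
  rw [← sum_single_eq w, map_sum]
  refine G.sum_mem fun i _ => ?_
  obtain ⟨k, hk⟩ := hw i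
  rw [map_smul, hk, Int.cast_smul_eq_zsmul]
  exact G.zsmul_mem (hM i) k

theorem latticeSet_subset {n : ℕ} (T M : Euc n →ₗ[ℝ] Euc n)
    (hM : ∀ i, M (EuclideanSpace.single i 1) ∈ latticeSet T) :
    latticeSet M ⊆ latticeSet T := by
  intro v hv
  obtain ⟨w, hw, rfl⟩ := (mem_latticeSet_iff _ _).1 hv
  exact map_intVec_mem T M hM hw

theorem single_mem {n : ℕ} (T : Euc n →ₗ[ℝ] Euc n) (i : Fin n) :
    T (EuclideanSpace.single i 1) ∈ latticeSet T :=
  (mem_latticeSet_iff _ _).2 ⟨_, IsIntVec.single i, rfl⟩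

/-- The standard basis. -/
def stdB (n : ℕ) : Module.Basis (Fin n) ℝ (Euc n) := (EuclideanSpace.basisFun (Fin n) ℝ).toBasis

theorem stdB_apply {n : ℕ} (i : Fin n) : stdB n i = EuclideanSpace.single i 1 := by
  simp [stdB]

theorem stdB_repr {n : ℕ} (x : Euc n) (i : Fin n) : (stdB n).repr x i = x i := by
  simp [stdB]

theorem int_det {n : ℕ} (T M : Euc n →ₗ[ℝ] Euc n)
    (hM : ∀ i, M (EuclideanSpace.single i 1) ∈ latticeSet T) :
    ∃ k : ℤ, LinearMap.det M = LinearMap.det T * k := by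
  have h1 : ∀ i, ∃ w, IsIntVec w ∧ T w = M (EuclideanSpace.single i 1) := fun i =>
    (mem_latticeSet_iff _ _).1 (hM i)
  choose w hw hTw using h1
  choose z hz using hw
  let Z : Matrix (Fin n) (Fin n) ℤ := Matrix.of fun i j => z j i
  let N : Euc n →ₗ[ℝ] Euc n := (stdB n).constr ℝ w
  have hN : M = T ∘ₗ N := by
    refine (stdB n).ext fun i => ?_
    rw [LinearMap.comp_apply, Module.Basis.constr_basis, hTw, stdB_apply]
  have hdet : LinearMap.det N = (Z.det : ℤ) := by
    rw [← LinearMap.det_toMatrix (stdB n)]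
    have : LinearMap.toMatrix (stdB n) (stdB n) N = Z.map (Int.castRingHom ℝ) := by
      ext i j
      rw [LinearMap.toMatrix_apply]
      simp only [N, Module.Basis.constr_basis, stdB_repr, hz]
      rfl
    rw [this, ← RingHom.mapMatrix_apply, ← RingHom.map_det]
    rfl
  exact ⟨Z.det, by rw [hN, LinearMap.det_comp, hdet]⟩

theorem abs_det_eq {n : ℕ} (T M : Euc n →ₗ[ℝ] Euc n) (hT : LinearMap.det T ≠ 0)
    (h : latticeSet T = latticeSet M) : |LinearMap.det M| = |LinearMap.det T| := by
  obtain ⟨k, hk⟩ := int_det T M (fun i => h ▸ single_mem M i)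
  obtain ⟨l, hl⟩ := int_det M T (fun i => h ▸ single_mem T i)
  have h1 : (k : ℝ) * l = 1 := by
    rw [hk] at hl
    have : LinearMap.det T * (k * l - 1) = 0 := by linear_combination -hl
    rcases mul_eq_zero.1 this with h | h
    · exact absurd h hT
    · linarith
  have h2 : k * l = 1 := by exact_mod_cast h1
  have h3 : |k| = 1 := Int.isUnit_iff_abs_eq.1 (IsUnit.of_mul_eq_one _ h2)
  have h4 : |(k : ℝ)| = 1 := by exact_mod_cast h3
  rw [hk, abs_mul, h4, mul_one]

theorem latDet_eq {n : ℕ} (T : Euc n →ₗ[ℝ] Euc n) (hT : LinearMap.det T ≠ 0) :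
    latDet (latticeSet T) = |LinearMap.det T| := by
  have : {d | ∃ T' : Euc n →ₗ[ℝ] Euc n, latticeSet T = latticeSet T' ∧ d = |LinearMap.det T'|}
      = {|LinearMap.det T|} := by
    ext d
    constructor
    · rintro ⟨T', h, rfl⟩
      exact abs_det_eq T T' hT h
    · rintro rfl
      exact ⟨T, rfl, rfl⟩
  rw [latDet, this, csInf_singleton]

theorem latDet_nonneg {n : ℕ} (Λ : Set (Euc n)) : 0 ≤ latDet Λ := by
  apply Real.sInf_nonneg
  rintro d ⟨T, -, rfl⟩
  exact abs_nonneg _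

theorem admissible_ball_iff {n : ℕ} (Λ : Set (Euc n)) :
    IsAdmissible Λ (unitBall n) ↔ ∀ v ∈ Λ, v ≠ 0 → 1 ≤ ‖v‖ := by
  unfold IsAdmissible unitBall
  rw [interior_closedBall _ one_ne_zero]
  constructor
  · intro h v hv hv0
    by_contra hlt
    exact hv0 (h ⟨hv, by simpa using hlt⟩)
  · rintro h v ⟨hv, hb⟩
    by_contra h0
    have := h v hv h0
    simp at hb
    linarith

theorem critDet_le {n : ℕ} (K : Set (Euc n)) (T : Euc n →ₗ[ℝ] Euc n) (hT : LinearMap.det T ≠ 0)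
    (h : IsAdmissible (latticeSet T) K) : critDet K ≤ |LinearMap.det T| := by
  refine csInf_le ⟨0, ?_⟩ ⟨latticeSet T, ⟨T, hT, rfl⟩, h, (latDet_eq T hT).symm⟩
  rintro d ⟨Λ, -, -, rfl⟩
  exact latDet_nonneg Λ

/-- Scaled version. -/
theorem critDet_le_scaled {n : ℕ} (T : Euc n →ₗ[ℝ] Euc n) (hT : LinearMap.det T ≠ 0)
    (r : ℝ) (hr : 0 < r) (h : ∀ v ∈ latticeSet T, v ≠ 0 → r ≤ ‖v‖) :
    r ^ n * critDet (unitBall n) ≤ |LinearMap.det T| := by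
  have h1 : latticeSet (r⁻¹ • T) = (fun v => r⁻¹ • v) '' latticeSet T := by
    have := latticeSet_comp (r⁻¹ • LinearMap.id) T
    rw [LinearMap.smul_comp, LinearMap.id_comp] at this
    exact this
  have hd : LinearMap.det (r⁻¹ • T) = r⁻¹ ^ n * LinearMap.det T := by
    rw [LinearMap.det_smul]; simp
  have h2 := critDet_le (unitBall n) (r⁻¹ • T) (by rw [hd]; positivity) (by
    rw [admissible_ball_iff, h1]
    rintro _ ⟨v, hv, rfl⟩ h0
    have hv0 : v ≠ 0 := by rintro rfl; simp at h0
    have := h v hv hv0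
    simp only [norm_smul, Real.norm_eq_abs]
    rw [abs_of_pos (by positivity), inv_mul_eq_div, one_le_div hr]
    exact this)
  rw [hd, abs_mul, abs_of_pos (by positivity), inv_pow, inv_mul_eq_div, le_div_iff₀ (by positivity)] at h2
  linarith

/-- If short vectors exist in all directions, we may choose independent ones. -/
theorem exists_bounded_indep {n : ℕ} (T : Euc n →ₗ[ℝ] Euc n) (hT : LinearMap.det T ≠ 0)
    (h : ∀ v ∈ latticeSet T, v ≠ 0 → 1 / 2 ≤ ‖v‖)
    (hpos : 0 < critDet (unitBall n))
    (hd : |LinearMap.det T| ≤ critDet (unitBall n)) :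
    ∃ M : Euc n →ₗ[ℝ] Euc n, LinearMap.det M ≠ 0 ∧
      ∀ i, M (EuclideanSpace.single i 1) ∈ latticeSet T ∧
        ‖M (EuclideanSpace.single i 1)‖ ≤ 2 ^ n := by
  set S : Set (Euc n) := {v | v ∈ latticeSet T ∧ ‖v‖ ≤ 2 ^ n} with hS
  have hspan : Submodule.span ℝ S = ⊤ := by
    by_contra hne
    have hb : (Submodule.span ℝ S)ᗮ ≠ ⊥ := fun hb =>
      hne ((Submodule.orthogonal_eq_bot_iff).1 hb)
    obtain ⟨u, hu, hu0⟩ := Submodule.exists_mem_ne_zero_of_ne_bot hb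
    set δ : ℝ := 1 / (2 * 2 ^ n) with hδ
    have hδ0 : 0 < δ := by positivity
    have hδ1 : δ ≤ 1 := by
      rw [hδ, div_le_one (by positivity)]
      have : (1 : ℝ) ≤ 2 ^ n := one_le_pow₀ (by norm_num)
      linarith
    have hun : 0 < ‖u‖ := norm_pos_iff.2 hu0
    let f : Module.Dual ℝ (Euc n) := (innerₛₗ ℝ u)
    have hf : ∀ x, f x = ⟪u, x⟫ := fun x => rfl
    let w : Euc n := ((δ - 1) / ‖u‖ ^ 2) • u
    let L : Euc n →ₗ[ℝ] Euc n := LinearMap.transvection f w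
    have hL : ∀ x, L x = x + ⟪u, x⟫ • w := fun x => rfl
    have hdL : LinearMap.det L = δ := by
      rw [LinearMap.transvection.det, hf]
      simp only [w, real_inner_smul_right, real_inner_self_eq_norm_sq]
      field_simp; ring
    have hnL : ∀ x, δ * ‖x‖ ≤ ‖L x‖ := by
      intro x
      refine le_of_sq_le_sq ?_ (norm_nonneg _)
      rw [hL, norm_add_sq_real]
      simp only [w, smul_smul, real_inner_smul_right, norm_smul, real_inner_comm u x, mul_pow,
        Real.norm_eq_abs, sq_abs]
      have hc := abs_real_inner_le_norm x u
      have hc2 : ⟪x, u⟫ ^ 2 ≤ ‖x‖ ^ 2 * ‖u‖ ^ 2 := by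
        rw [← mul_pow, ← sq_abs]; gcongr
      have : ‖x‖ ^ 2 + 2 * (⟪x, u⟫ * ((δ - 1) / ‖u‖ ^ 2) * ⟪x, u⟫) +
          (⟪x, u⟫ * ((δ - 1) / ‖u‖ ^ 2)) ^ 2 * ‖u‖ ^ 2 =
          ‖x‖ ^ 2 - (1 - δ ^ 2) * (⟪x, u⟫ ^ 2 / ‖u‖ ^ 2) := by
        field_simp; ring
      have h3 : ⟪x, u⟫ ^ 2 / ‖u‖ ^ 2 ≤ ‖x‖ ^ 2 := by
        rw [div_le_iff₀ (by positivity)]; linarith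
      rw [real_inner_comm x u]
      have h4 : 0 ≤ 1 - δ ^ 2 := by nlinarith
      have h5 := mul_le_mul_of_nonneg_left h3 h4
      nlinarith [this, h5]
    have key := critDet_le_scaled (L ∘ₗ T) (by
        rw [LinearMap.det_comp, hdL]; exact mul_ne_zero hδ0.ne' hT) (1 / 2) (by norm_num) (by
      rw [latticeSet_comp]
      rintro _ ⟨v, hv, rfl⟩ h0
      have hv0 : v ≠ 0 := by rintro rfl; simp at h0
      by_cases hs : ‖v‖ ≤ 2 ^ n
      · have : ⟪u, v⟫ = 0 := by
          rw [real_inner_comm]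
          exact (Submodule.mem_orthogonal _ _).1 hu v (Submodule.subset_span ⟨hv, hs⟩)
        rw [hL, this, zero_smul, add_zero]
        exact h v hv hv0
      · refine le_trans ?_ (hnL v)
        push Not at hs
        calc (1 / 2 : ℝ) = δ * 2 ^ n := by rw [hδ]; field_simp
          _ ≤ δ * ‖v‖ := by gcongr)
    rw [LinearMap.det_comp, hdL, abs_mul, abs_of_pos hδ0] at key
    have : δ * |LinearMap.det T| ≤ δ * critDet (unitBall n) := by gcongr
    have h7 : (1 / 2 : ℝ) ^ n = 2 * δ := by
      rw [hδ, one_div_pow]; field_simp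
    rw [h7] at key
    nlinarith [mul_pos hδ0 hpos]
  obtain ⟨f, hf, hfs, hfi⟩ := Submodule.exists_fun_fin_finrank_span_eq ℝ S
  have hfr : Module.finrank ℝ (Submodule.span ℝ S) = n := by
    rw [hspan, finrank_top]; simp
  let b : Module.Basis _ ℝ (Euc n) := Module.Basis.mk hfi (by rw [hfs, hspan])
  let b' := b.reindex (finCongr hfr)
  have hb' : ∀ i, b' i ∈ S := fun i => by
    simp only [b', b, Module.Basis.reindex_apply, Module.Basis.mk_apply]; exact hf _
  let e : Euc n ≃ₗ[ℝ] Euc n := (stdB n).equiv b' (Equiv.refl _)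
  have he : ∀ i, e (EuclideanSpace.single i 1) = b' i := fun i => by
    rw [← stdB_apply, Module.Basis.equiv_apply]; rfl
  refine ⟨e.toLinearMap, ?_, fun i => ?_⟩
  · exact (LinearEquiv.isUnit_det' e).ne_zero
  · have := hb' i
    rw [← he] at this
    exact this

theorem norm_le_of_cols {n : ℕ} (M : Euc n →ₗ[ℝ] Euc n) (R : ℝ)
    (hM : ∀ i, ‖M (EuclideanSpace.single i 1)‖ ≤ R) (x : Euc n) (c : ℝ) (hc : ∀ i, |x i| ≤ c) 
    (hc0 : 0 ≤ c) : ‖M x‖ ≤ n * (c * R) := by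
  conv_lhs => rw [← sum_single_eq x, map_sum]
  refine (norm_sum_le _ _).trans ?_
  calc _ ≤ ∑ _i : Fin n, c * R := by
        refine Finset.sum_le_sum fun i _ => ?_
        rw [map_smul, norm_smul, Real.norm_eq_abs]
        exact mul_le_mul (hc i) (hM i) (norm_nonneg _) hc0
    _ = n * (c * R) := by simp

/-- Reduction of a bounded full-rank system to a bounded basis. -/
theorem reduce {n : ℕ} (T : Euc n →ₗ[ℝ] Euc n) (hT : LinearMap.det T ≠ 0) (j : ℕ) :
    ∀ (M : Euc n →ₗ[ℝ] Euc n) (R : ℝ), LinearMap.det M ≠ 0 →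
      |LinearMap.det M| < 2 ^ j * |LinearMap.det T| →
      (∀ i, M (EuclideanSpace.single i 1) ∈ latticeSet T) →
      (∀ i, ‖M (EuclideanSpace.single i 1)‖ ≤ R) →
      ∃ T' : Euc n →ₗ[ℝ] Euc n, latticeSet T' = latticeSet T ∧
        ∀ i, ‖T' (EuclideanSpace.single i 1)‖ ≤ (n + 1) ^ j * R := by
  induction j with
  | zero =>
    intro M R hM hlt hmem hR
    exfalso
    obtain ⟨k, hk⟩ := int_det T M hmem
    have hk0 : k ≠ 0 := by rintro rfl; simp at hk; exact hM hk
    have h1 : (1 : ℝ) ≤ |(k : ℝ)| := by exact_mod_cast Int.one_le_abs hk0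
    rw [hk, abs_mul] at hlt
    have := abs_pos.2 hT
    nlinarith
  | succ j ih =>
    intro M R hM hlt hmem hR
    by_cases heq : latticeSet T ⊆ latticeSet M
    · refine ⟨M, (latticeSet_subset T M hmem).antisymm heq, fun i => ?_⟩
      have h0 : 0 ≤ R := (norm_nonneg _).trans (hR i)
      refine (hR i).trans (le_mul_of_one_le_left h0 (one_le_pow₀ ?_))
      have : (0 : ℝ) ≤ n := by positivity
      linarith
    · obtain ⟨v, hv, hvM⟩ := Set.not_subset.1 heq
      let eM : Euc n ≃ₗ[ℝ] Euc n := LinearMap.equivOfDetNeZero M hM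
      have heM : ∀ x, eM x = M x := fun x => rfl
      let a : Euc n := eM.symm v
      have ha : M a = v := by rw [← heM]; simp [a]
      let r : Euc n := WithLp.toLp 2 fun i => ((round (a i) : ℤ) : ℝ)
      have hr : IsIntVec r := fun i => ⟨round (a i), rfl⟩
      let c : Euc n := a - r
      have hc : ∀ i, |c i| ≤ 1 / 2 := fun i => abs_sub_round (a i)
      have hMc : M c ∈ latticeSet T := by
        simp only [c, map_sub, ha]
        exact sub_mem_latticeSet T hv (map_intVec_mem T M hmem hr)
      have hc0 : ∃ l, c l ≠ 0 := by
        by_contra hcon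
        push Not at hcon
        have : c = 0 := by ext i; exact hcon i
        apply hvM
        rw [mem_latticeSet_iff]
        refine ⟨a, ?_, ha⟩
        have : a = r := sub_eq_zero.1 this
        rw [this]; exact hr
      obtain ⟨l, hl⟩ := hc0
      let N : Euc n →ₗ[ℝ] Euc n := LinearMap.transvection ((stdB n).coord l)
        (c - EuclideanSpace.single l 1)
      have hNdet : LinearMap.det N = c l := by
        rw [LinearMap.transvection.det, Module.Basis.coord_apply, stdB_repr]
        simp
      have hN : ∀ i, N (EuclideanSpace.single i 1) =
          if i = l then c else EuclideanSpace.single i 1 := by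
        intro i
        simp only [N, LinearMap.transvection.apply, Module.Basis.coord_apply, stdB_repr]
        by_cases hil : i = l
        · subst hil; simp
        · simp [hil, Ne.symm hil]
      have hRl : 0 ≤ R := (norm_nonneg _).trans (hR l)
      obtain ⟨T', h1, h2⟩ := ih (M ∘ₗ N) ((n + 1) * R) (by
          rw [LinearMap.det_comp, hNdet]; exact mul_ne_zero hM hl) (by
          rw [LinearMap.det_comp, hNdet, abs_mul]
          rw [pow_succ] at hlt
          have := hc l
          have := abs_nonneg (LinearMap.det M)
          nlinarith) (by
          intro i
          rw [LinearMap.comp_apply, hN]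
          split_ifs
          · exact hMc
          · exact hmem i) (by
          intro i
          rw [LinearMap.comp_apply, hN]
          split_ifs
          · refine (norm_le_of_cols M R hR c (1 / 2) hc (by norm_num)).trans ?_
            have : (0 : ℝ) ≤ n := by positivity
            nlinarith
          · refine (hR i).trans ?_
            have : (0 : ℝ) ≤ n := by positivity
            nlinarith)
      refine ⟨T', h1, fun i => (h2 i).trans (le_of_eq ?_)⟩
      ring

theorem abs_det_le {n : ℕ} (M : Euc n →ₗ[ℝ] Euc n) (R : ℝ)
    (hM : ∀ i, ‖M (EuclideanSpace.single i 1)‖ ≤ R) :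
    |LinearMap.det M| ≤ (n.factorial : ℝ) * R ^ n := by
  rw [← LinearMap.det_toMatrix (stdB n)]
  have := Matrix.det_le (A := LinearMap.toMatrix (stdB n) (stdB n) M)
    (abv := IsAbsoluteValue.toAbsoluteValue (abs : ℝ → ℝ)) (x := R) (by
    intro i j
    rw [LinearMap.toMatrix_apply, stdB_repr, stdB_apply]
    exact (by simpa using PiLp.norm_apply_le (M (EuclideanSpace.single j 1)) i :
      |(M (EuclideanSpace.single j 1)) i| ≤ _).trans (hM j))
  simpa using this

theorem bounded_basis {n : ℕ} (hpos : 0 < critDet (unitBall n)) :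
    ∃ R : ℝ, 0 ≤ R ∧ ∀ T : Euc n →ₗ[ℝ] Euc n, LinearMap.det T ≠ 0 →
      (∀ v ∈ latticeSet T, v ≠ 0 → 1 / 2 ≤ ‖v‖) → |LinearMap.det T| ≤ critDet (unitBall n) →
      ∃ T' : Euc n →L[ℝ] Euc n, latticeSet T'.toLinearMap = latticeSet T ∧ ‖T'‖ ≤ R := by
  set d := critDet (unitBall n)
  obtain ⟨j, hj⟩ := pow_unbounded_of_one_lt ((n.factorial : ℝ) * (2 ^ n) ^ n / ((1 / 2) ^ n * d))
    (one_lt_two : (1 : ℝ) < 2)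
  refine ⟨n * ((n + 1) ^ j * 2 ^ n), by positivity, fun T hT hmin hd => ?_⟩
  obtain ⟨M, hM, hMi⟩ := exists_bounded_indep T hT hmin hpos hd
  have hlow := critDet_le_scaled T hT (1 / 2) (by norm_num) hmin
  have hup := abs_det_le M (2 ^ n) (fun i => (hMi i).2)
  rw [div_lt_iff₀ (by positivity)] at hj
  obtain ⟨T', h1, h2⟩ := reduce T hT j M (2 ^ n) hM (by
    refine hup.trans_lt (hj.trans_le ?_)
    gcongr) (fun i => (hMi i).1) (fun i => (hMi i).2)
  refine ⟨LinearMap.toContinuousLinearMap T', ?_, ?_⟩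
  · simpa using h1
  · refine ContinuousLinearMap.opNorm_le_bound _ (by positivity) fun x => ?_
    have := norm_le_of_cols T' _ h2 x ‖x‖ (fun i => by simpa using PiLp.norm_apply_le x i)
      (norm_nonneg _)
    simp only [LinearMap.coe_toContinuousLinearMap']
    linarith

theorem near_critical {n : ℕ} (T0 : Euc n →ₗ[ℝ] Euc n) (hT0 : LinearMap.det T0 ≠ 0)
    (hpos : 0 < critDet (unitBall n))
    (huniq : ∀ Λ' : Set (Euc n), IsCriticalLattice Λ' (unitBall n) →
      ∃ U : Euc n ≃ₗᵢ[ℝ] Euc n, Λ' = ⇑U '' latticeSet T0) (η : ℝ) (hη : 0 < η) :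
    ∃ ε0 > (0 : ℝ), ∀ ε, 0 < ε → ε ≤ ε0 → ∀ T : Euc n →ₗ[ℝ] Euc n, LinearMap.det T ≠ 0 →
      (∀ v ∈ latticeSet T, v ≠ 0 → 1 - 2 * ε ≤ ‖v‖ ^ 2) →
      |LinearMap.det T| ≤ critDet (unitBall n) →
      ∃ (U : Euc n ≃ₗᵢ[ℝ] Euc n) (A : Euc n →L[ℝ] Euc n), ‖A - 1‖ ≤ η ∧
        latticeSet T = (fun x => U (A x)) '' latticeSet T0 := by
  by_contra hcon
  push Not at hcon
  have hcon' : ∀ k : ℕ, _ := fun k => hcon (1 / (8 * ((k : ℝ) + 1))) (by positivity)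
  choose ε hε0 hε T hT hmin hd hno using hcon'
  obtain ⟨R, hR0, hR⟩ := bounded_basis hpos
  have hε1 : ∀ k, ε k ≤ 1 / 8 := fun k => (hε k).trans (by
    apply one_div_le_one_div_of_le (by norm_num)
    have : (0 : ℝ) ≤ k := by positivity
    linarith)
  have hεt : Filter.Tendsto ε Filter.atTop (nhds 0) := by
    refine squeeze_zero (fun k => (hε0 k).le) hε ?_
    have := (tendsto_one_div_add_atTop_nhds_zero_nat (𝕜 := ℝ)).const_mul (1 / 8)
    rw [mul_zero] at this
    refine this.congr fun k => ?_
    field_simp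
  have hex := fun k => hR (T k) (hT k) (fun v hv hv0 => by
    have h1 := hmin k v hv hv0
    have h2 := hε1 k
    by_contra hlt
    push Not at hlt
    nlinarith [norm_nonneg v]) (hd k)
  choose T' hT' hTR using hex
  have hmem : ∀ k, T' k ∈ Metric.closedBall (0 : Euc n →L[ℝ] Euc n) R := fun k => by
    simpa using hTR k
  obtain ⟨P, -, φ, hφ, hlim⟩ := (isCompact_closedBall (0 : Euc n →L[ℝ] Euc n) R).tendsto_subseq hmem
  have hdet' : ∀ k, |LinearMap.det (T' k).toLinearMap| = |LinearMap.det (T k)| := fun k =>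
    abs_det_eq _ _ (hT k) (hT' k).symm
  have hdlim : Filter.Tendsto (fun k => |LinearMap.det (T' (φ k)).toLinearMap|) Filter.atTop
      (nhds |LinearMap.det P.toLinearMap|) :=
    ((ContinuousLinearMap.continuous_det.abs).tendsto P).comp hlim
  have hPle : |LinearMap.det P.toLinearMap| ≤ critDet (unitBall n) :=
    le_of_tendsto' hdlim fun k => (hdet' _).trans_le (hd _)
  have hPge : (1 / 2) ^ n * critDet (unitBall n) ≤ |LinearMap.det P.toLinearMap| := by
    refine ge_of_tendsto' hdlim fun k => ?_
    rw [hdet']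
    refine critDet_le_scaled _ (hT _) _ (by norm_num) fun v hv hv0 => ?_
    have h1 := hmin _ v hv hv0
    have h2 := hε1 (φ k)
    by_contra hlt
    push Not at hlt
    nlinarith [norm_nonneg v]
  have hP0 : LinearMap.det P.toLinearMap ≠ 0 := by
    intro h0
    rw [h0, abs_zero] at hPge
    have : 0 < (1 / 2 : ℝ) ^ n * critDet (unitBall n) := by positivity
    linarith
  have hTinj : ∀ k w, T' k w = 0 → w = 0 := by
    intro k w hw
    have hd0 : LinearMap.det (T' k).toLinearMap ≠ 0 := by
      rw [← abs_pos, hdet', abs_pos]; exact hT k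
    have := (LinearMap.equivOfDetNeZero _ hd0).map_eq_zero_iff (x := w)
    exact this.1 hw
  have hadm : IsAdmissible (latticeSet P.toLinearMap) (unitBall n) := by
    rw [admissible_ball_iff]
    intro v hv hv0
    obtain ⟨w, hw, rfl⟩ := (mem_latticeSet_iff _ _).1 hv
    have hw0 : w ≠ 0 := by rintro rfl; simp at hv0
    have h1 : Filter.Tendsto (fun k => ‖T' (φ k) w‖ ^ 2) Filter.atTop (nhds (‖P w‖ ^ 2)) := by
      have : Continuous fun Q : Euc n →L[ℝ] Euc n => ‖Q w‖ ^ 2 := by fun_prop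
      exact (this.tendsto P).comp hlim
    have h2 : Filter.Tendsto (fun k => 1 - 2 * ε (φ k)) Filter.atTop (nhds (1 - 2 * 0)) :=
      ((hεt.comp hφ.tendsto_atTop).const_mul 2).const_sub 1
    have h3 := le_of_tendsto_of_tendsto' h2 h1 fun k => by
      refine hmin _ _ ?_ (fun h => hw0 (hTinj _ _ h))
      rw [← hT']
      exact (mem_latticeSet_iff _ _).2 ⟨w, hw, rfl⟩
    have h4 : 1 ≤ ‖P w‖ ^ 2 := by linarith
    have h5 : 1 ≤ ‖P w‖ := by
      by_contra hlt
      push Not at hlt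
      nlinarith [norm_nonneg (P w)]
    exact h5
  obtain ⟨U, hU⟩ := huniq (latticeSet P.toLinearMap) ⟨⟨_, hP0, rfl⟩, hadm, by
    rw [latDet_eq _ hP0]
    exact le_antisymm hPle (critDet_le _ _ hP0 hadm)⟩
  let Pe := LinearMap.equivOfDetNeZero _ hP0
  let Pi : Euc n →L[ℝ] Euc n := LinearMap.toContinuousLinearMap Pe.symm.toLinearMap
  have hPi : ∀ x, Pi (P x) = x := fun x => Pe.symm_apply_apply x
  have hPi2 : ∀ x, P (Pi x) = x := fun x => Pe.apply_symm_apply x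
  let Uc : Euc n →L[ℝ] Euc n := U.toContinuousLinearEquiv.toContinuousLinearMap
  let Ui : Euc n →L[ℝ] Euc n := U.symm.toContinuousLinearEquiv.toContinuousLinearMap
  let F : (Euc n →L[ℝ] Euc n) → (Euc n →L[ℝ] Euc n) := fun Q => Ui.comp (Q.comp (Pi.comp Uc))
  have hF : Continuous F := by fun_prop
  have hFP : F P = 1 := by
    ext1 x
    change U.symm (P (Pi (U x))) = x
    rw [hPi2]; simp
  have hl : Filter.Tendsto (fun k => ‖F (T' (φ k)) - 1‖) Filter.atTop (nhds 0) := by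
    have : Continuous fun Q => ‖F Q - 1‖ := by fun_prop
    have h := (this.tendsto P).comp hlim
    rw [hFP, sub_self, norm_zero] at h
    exact h
  obtain ⟨k, hk⟩ := (hl.eventually (ge_mem_nhds hη)).exists
  refine hno (φ k) U (F (T' (φ k))) hk ?_
  rw [← hT']
  ext v
  constructor
  · intro hv
    obtain ⟨w, hw, rfl⟩ := (mem_latticeSet_iff _ _).1 hv
    have hPw : P w ∈ latticeSet P.toLinearMap := (mem_latticeSet_iff _ _).2 ⟨w, hw, rfl⟩
    rw [hU] at hPw
    obtain ⟨y, hy, hyw⟩ := hPw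
    refine ⟨y, hy, ?_⟩
    change U (U.symm (T' (φ k) (Pi (U y)))) = T' (φ k) w
    rw [hyw, hPi]; simp
  · rintro ⟨y, hy, rfl⟩
    have : U y ∈ latticeSet P.toLinearMap := by rw [hU]; exact ⟨y, hy, rfl⟩
    obtain ⟨w, hw, hwy⟩ := (mem_latticeSet_iff _ _).1 this
    refine (mem_latticeSet_iff _ _).2 ⟨w, hw, ?_⟩
    change T' (φ k) w = U (U.symm (T' (φ k) (Pi (U y))))
    rw [← hwy]
    change _ = U (U.symm (T' (φ k) (Pi (P w))))
    rw [hPi]; simp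

theorem trace_comp_projMap {n : ℕ} (M : Euc n →ₗ[ℝ] Euc n) (y : Euc n) :
    LinearMap.trace ℝ (Euc n) (M ∘ₗ projMap y) = ⟪y, M y⟫ := by
  have : M ∘ₗ projMap y = LinearMap.smulRight (innerₛₗ ℝ y) (M y) := by
    ext1 x
    simp [projMap, real_inner_comm]
  rw [this, LinearMap.trace_smulRight]
  rfl

theorem eut_trace {n : ℕ} (s : Finset (Euc n)) (υ : Euc n → ℝ) (hυ : ∀ x ∉ s, υ x = 0)
    (h : ∑ᶠ x, υ x • projMap x = (LinearMap.id : Euc n →ₗ[ℝ] Euc n)) (M : Euc n →ₗ[ℝ] Euc n) :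
    LinearMap.trace ℝ (Euc n) M = ∑ y ∈ s, υ y * ⟪y, M y⟫ := by
  rw [finsum_eq_sum_of_support_subset (s := s)] at h
  · conv_lhs => rw [← LinearMap.comp_id M, ← h]
    have hc : M ∘ₗ (∑ y ∈ s, υ y • projMap y) = ∑ y ∈ s, M ∘ₗ (υ y • projMap y) :=
      Finset.mul_sum s (fun y => (υ y • projMap y : Module.End ℝ (Euc n))) (M : Module.End ℝ (Euc n))
    rw [hc, map_sum]
    refine Finset.sum_congr rfl fun y _ => ?_
    rw [LinearMap.comp_smul, map_smul, trace_comp_projMap, smul_eq_mul]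
  · intro x hx
    by_contra hxs
    apply hx
    change υ x • projMap x = 0
    rw [hυ x hxs, zero_smul]

theorem perfect_bound {n : ℕ} (s : Finset (Euc n)) (hs : IsPerfectCfg (s : Set (Euc n))) :
    ∃ C > (0 : ℝ), ∀ M : Euc n →L[ℝ] Euc n, M.toLinearMap.IsSymmetric → ∀ q : ℝ, 0 ≤ q →
      (∀ y ∈ s, |⟪y, M y⟫| ≤ q) → ‖M‖ ≤ C * q := by
  let V : Submodule ℝ (Euc n →L[ℝ] Euc n) :=
    { carrier := {M | M.toLinearMap.IsSymmetric}
      add_mem' := fun {a b} ha hb => by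
        intro x y
        have h1 := ha x y
        have h2 := hb x y
        simp only [ContinuousLinearMap.coe_coe] at h1 h2
        simp [inner_add_left, inner_add_right, h1, h2]
      zero_mem' := by intro x y; simp
      smul_mem' := fun c a ha => by
        intro x y
        have h1 := ha x y
        simp only [ContinuousLinearMap.coe_coe] at h1
        simp [real_inner_smul_left, real_inner_smul_right, h1] }
  let Φ : V →ₗ[ℝ] (s → ℝ) :=
    { toFun := fun M y => ⟪(y : Euc n), M.1 y⟫
      map_add' := fun a b => by ext y; simp [inner_add_right]
      map_smul' := fun c a => by ext y; simp [real_inner_smul_right] }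
  have hker : LinearMap.ker Φ = ⊥ := by
    rw [LinearMap.ker_eq_bot']
    intro M hM
    have h0 : ∀ y ∈ s, ⟪y, M.1 y⟫ = 0 := fun y hy => congrFun hM ⟨y, hy⟩
    have hsym : M.1.toLinearMap.IsSymmetric := M.2
    have h1 : ∀ T ∈ Submodule.span ℝ (projMap '' (s : Set (Euc n))),
        LinearMap.trace ℝ (Euc n) (M.1.toLinearMap ∘ₗ T) = 0 := by
      intro T hT
      induction hT using Submodule.span_induction with
      | mem x hx =>
        obtain ⟨y, hy, rfl⟩ := hx
        rw [trace_comp_projMap]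
        exact h0 y hy
      | zero => simp
      | add x y _ _ hx hy => rw [LinearMap.comp_add, map_add, hx, hy, add_zero]
      | smul c x _ hx => rw [LinearMap.comp_smul, map_smul, hx, smul_zero]
    have h2 := h1 _ (hs _ hsym)
    rw [LinearMap.trace_eq_sum_inner _ (EuclideanSpace.basisFun (Fin n) ℝ)] at h2
    have h3 : ∀ x, ⟪x, (M.1.toLinearMap ∘ₗ M.1.toLinearMap) x⟫ = ‖M.1 x‖ ^ 2 := fun x => by
      rw [LinearMap.comp_apply, ← hsym, real_inner_self_eq_norm_sq]; rfl
    simp only [h3] at h2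
    rw [Finset.sum_eq_zero_iff_of_nonneg (fun _ _ => by positivity)] at h2
    apply Subtype.ext
    apply ContinuousLinearMap.coe_injective
    refine (stdB n).ext fun i => ?_
    have := h2 i (Finset.mem_univ i)
    rw [sq_eq_zero_iff, norm_eq_zero] at this
    simpa [stdB] using this
  obtain ⟨K, hK, hanti⟩ := LinearMap.exists_antilipschitzWith (𝕜 := ℝ) (E := V) (F := s → ℝ) Φ hker
  refine ⟨K, by exact_mod_cast hK, fun M hM q hq hy => ?_⟩
  have h1 := hanti.le_mul_dist (⟨M, hM⟩ : V) 0
  have e1 : dist (⟨M, hM⟩ : V) 0 = ‖M‖ := dist_zero_right M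
  rw [e1, map_zero, dist_zero_right] at h1
  refine h1.trans ?_
  gcongr
  rw [pi_norm_le_iff_of_nonneg hq]
  intro y
  exact hy y y.2

theorem log_ineq (x : ℝ) (hx : |x| ≤ 1 / 2) : x - 2 * x ^ 2 ≤ Real.log (1 + x) := by
  obtain ⟨h1, h2⟩ := abs_le.1 hx
  have hp : 0 < 1 + x := by linarith
  refine le_trans ?_ (Real.one_sub_inv_le_log_of_pos hp)
  have : 1 - (1 + x)⁻¹ = x / (1 + x) := by field_simp; ring
  rw [this, le_div_iff₀ hp]
  nlinarith [mul_nonneg (sq_nonneg x) (by linarith : 0 ≤ 1 + 2 * x)]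

theorem det_adjoint_euc {n : ℕ} (A : Euc n →ₗ[ℝ] Euc n) :
    LinearMap.det (LinearMap.adjoint A) = LinearMap.det A := by
  let b := EuclideanSpace.basisFun (Fin n) ℝ
  rw [← LinearMap.det_toMatrix b.toBasis, ← LinearMap.det_toMatrix b.toBasis,
    LinearMap.toMatrix_adjoint b b, Matrix.det_conjTranspose]
  simp

theorem log_det_ge {n : ℕ} (A : Euc n →L[ℝ] Euc n) (μ : ℝ)
    (hμ : ‖ContinuousLinearMap.adjoint A ∘L A - 1‖ ≤ μ) (hμ2 : μ ≤ 1 / 2) :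
    LinearMap.trace ℝ (Euc n) (ContinuousLinearMap.adjoint A ∘L A - 1).toLinearMap - 2 * n * μ ^ 2
      ≤ Real.log (LinearMap.det A.toLinearMap ^ 2) := by
  set B : Euc n →L[ℝ] Euc n := ContinuousLinearMap.adjoint A ∘L A with hB
  have hsym : B.toLinearMap.IsSymmetric := by
    intro x y
    simp [hB, ContinuousLinearMap.adjoint_inner_left, ContinuousLinearMap.adjoint_inner_right]
  have hfr : Module.finrank ℝ (Euc n) = n := by simp
  have hdet : LinearMap.det A.toLinearMap ^ 2 = ∏ i, hsym.eigenvalues hfr i := by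
    have h1 := hsym.det_eq_prod_eigenvalues hfr
    simp only [RCLike.ofReal_real_eq_id, id] at h1
    rw [← h1]
    have h2 : B.toLinearMap = LinearMap.adjoint A.toLinearMap ∘ₗ A.toLinearMap := by
      ext1 x
      rfl
    rw [h2, LinearMap.det_comp, det_adjoint_euc]
    simp [sq]
  have htr : LinearMap.trace ℝ (Euc n) (B - 1).toLinearMap
      = ∑ i, (hsym.eigenvalues hfr i - 1) := by
    have h1 := hsym.trace_eq_sum_eigenvalues hfr
    simp only [RCLike.ofReal_real_eq_id, id] at h1
    have h2 : (B - 1).toLinearMap = B.toLinearMap - LinearMap.id := rfl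
    rw [h2, map_sub, h1]
    simp
  have hev : ∀ i, |hsym.eigenvalues hfr i - 1| ≤ μ := by
    intro i
    have h1 := hsym.apply_eigenvectorBasis hfr i
    have hn1 : ‖hsym.eigenvectorBasis hfr i‖ = 1 := (hsym.eigenvectorBasis hfr).norm_eq_one i
    have h2 := (B - 1).le_opNorm (hsym.eigenvectorBasis hfr i)
    have h3 : (B - 1) (hsym.eigenvectorBasis hfr i) =
        (hsym.eigenvalues hfr i - 1) • hsym.eigenvectorBasis hfr i := by
      rw [sub_smul, one_smul]
      change B _ - _ = _
      congr 1
    rw [h3, norm_smul, hn1, mul_one, mul_one, Real.norm_eq_abs] at h2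
    exact h2.trans hμ
  have hne : ∀ i, hsym.eigenvalues hfr i ≠ 0 := by
    intro i h0
    have := hev i
    rw [h0] at this
    norm_num at this
    linarith
  rw [hdet, Real.log_prod (fun i _ => hne i), htr]
  have hsum : ∑ i : Fin n, ((hsym.eigenvalues hfr i - 1) - 2 * μ ^ 2) ≤
      ∑ i, Real.log (hsym.eigenvalues hfr i) := by
    refine Finset.sum_le_sum fun i _ => ?_
    have h1 := log_ineq _ ((hev i).trans hμ2)
    rw [add_sub_cancel] at h1
    have h2 : (hsym.eigenvalues hfr i - 1) ^ 2 ≤ μ ^ 2 := by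
      rw [← sq_abs]; gcongr; exact hev i
    linarith
  rw [Finset.sum_sub_distrib] at hsum
  simp only [Finset.sum_const, Finset.card_univ, Fintype.card_fin, nsmul_eq_mul] at hsum
  linarith

set_option maxHeartbeats 1000000 in
theorem local_estimate {n : ℕ} (s : Finset (Euc n)) (hunit : ∀ y ∈ s, ‖y‖ = 1)
    (hext : IsExtremeCfg (s : Set (Euc n)))
    (hred : ∀ x ∈ s, IsSemiEutacticCfg ((s : Set (Euc n)) \ {x, -x})) :
    ∃ C > (0 : ℝ), ∃ η > (0 : ℝ), η ≤ 1 / 100 ∧ ∀ (A : Euc n →L[ℝ] Euc n) (ε : ℝ), 0 < ε →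
      ‖A - 1‖ ≤ η → (∀ y ∈ s, 1 - 2 * ε ≤ ‖A y‖ ^ 2) →
      (∃ x ∈ s, ∀ y ∈ s, y ≠ x → y ≠ -x → 1 ≤ ‖A y‖ ^ 2) →
      LinearMap.det A.toLinearMap ≠ 0 → |LinearMap.det A.toLinearMap| ≤ 1 →
      1 - C * ε ^ 2 ≤ |LinearMap.det A.toLinearMap| := by
  obtain ⟨C1, hC1, hperf⟩ := perfect_bound s hext.1
  obtain ⟨υ, hυpos, hυ0, -, -, hυid⟩ := hext.2
  have hυ0' : ∀ x ∉ s, υ x = 0 := fun x hx => hυ0 x (by simpa using hx)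
  have hυtr := eut_trace s υ hυ0' hυid
  have hυsum : ∑ y ∈ s, υ y = n := by
    have h := hυtr LinearMap.id
    rw [LinearMap.trace_id] at h
    simp only [LinearMap.id_apply, real_inner_self_eq_norm_sq, finrank_euclideanSpace,
      Fintype.card_fin] at h
    rw [h]
    refine Finset.sum_congr rfl fun y hy => ?_
    rw [hunit y hy]; ring
  obtain ⟨m, hm, hmle⟩ : ∃ m > (0 : ℝ), ∀ y ∈ s, m ≤ υ y := by
    rcases s.eq_empty_or_nonempty with rfl | hne
    · exact ⟨1, one_pos, by simp⟩
    · obtain ⟨y, hy, hmin⟩ := s.exists_min_image υ hne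
      exact ⟨υ y, hυpos y hy, hmin⟩
  set a : ℝ := C1 * (2 * n / m) with ha
  set b : ℝ := C1 * (2 * n / m + 2) with hb
  have ha0 : 0 ≤ a := by positivity
  have hb0 : 0 < b := by positivity
  refine ⟨8 * n * b ^ 2 + 1, by positivity, min (1 / 100) (1 / (6 * (a + 1))), by positivity,
    min_le_left _ _, ?_⟩
  intro A ε hε hA hq hx hdet0 hdet1
  set η := min (1 / 100) (1 / (6 * (a + 1))) with hη
  have hη0 : 0 < η := by positivity
  have hη1 : η ≤ 1 / 100 := min_le_left _ _
  have hη2 : η ≤ 1 / (6 * (a + 1)) := min_le_right _ _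
  set M : Euc n →L[ℝ] Euc n := ContinuousLinearMap.adjoint A ∘L A - 1 with hM
  set μ := ‖M‖ with hμ
  have hμ0 : 0 ≤ μ := norm_nonneg _
  have hadj : ‖ContinuousLinearMap.adjoint A - 1‖ ≤ η := by
    have : ContinuousLinearMap.adjoint A - 1 = ContinuousLinearMap.adjoint (A - 1) := by
      rw [map_sub]; congr 1
      exact (star_one (Euc n →L[ℝ] Euc n)).symm
    rw [this, LinearIsometryEquiv.norm_map]; exact hA
  have hμη : μ ≤ 3 * η := by
    have h1 : M = (ContinuousLinearMap.adjoint A - 1) ∘L (A - 1) + (A - 1) +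
        (ContinuousLinearMap.adjoint A - 1) := by
      rw [hM]; ext1 x; simp; abel
    have h2 : ‖(ContinuousLinearMap.adjoint A - 1) ∘L (A - 1)‖ ≤ η * η :=
      (ContinuousLinearMap.opNorm_comp_le _ _).trans (by gcongr)
    have h3 := norm_add₃_le (a := (ContinuousLinearMap.adjoint A - 1) ∘L (A - 1)) (b := A - 1)
      (c := ContinuousLinearMap.adjoint A - 1)
    rw [hμ, h1]
    nlinarith
  have haμ : a * μ ≤ 1 / 2 := by
    have h1 : η * (6 * (a + 1)) ≤ 1 := by
      rwa [le_div_iff₀ (by positivity)] at hη2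
    nlinarith
  have hlog := log_det_ge A μ le_rfl (by linarith)
  rw [← hM] at hlog
  have hdd : 0 < LinearMap.det A.toLinearMap ^ 2 := by positivity
  have hdd1 : LinearMap.det A.toLinearMap ^ 2 ≤ 1 := by
    rw [← sq_abs]; exact pow_le_one₀ (abs_nonneg _) hdet1
  have hlog0 : Real.log (LinearMap.det A.toLinearMap ^ 2) ≤ 0 := Real.log_nonpos hdd.le hdd1
  have hqy : ∀ y ∈ s, ⟪y, M.toLinearMap y⟫ = ‖A y‖ ^ 2 - 1 := by
    intro y hy
    have h1 : M.toLinearMap y = ContinuousLinearMap.adjoint A (A y) - y := rfl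
    rw [h1, inner_sub_right, ContinuousLinearMap.adjoint_inner_right, real_inner_self_eq_norm_sq,
      real_inner_self_eq_norm_sq, hunit y hy]
    ring
  have hMsym : M.toLinearMap.IsSymmetric := by
    intro x y
    have h1 : ∀ y, M.toLinearMap y = ContinuousLinearMap.adjoint A (A y) - y := fun y => rfl
    rw [h1, h1, inner_sub_left, inner_sub_right, ContinuousLinearMap.adjoint_inner_right,
      ContinuousLinearMap.adjoint_inner_left]
  have htr := hυtr M.toLinearMap
  set t := LinearMap.trace ℝ (Euc n) M.toLinearMap with ht
  have hub : ∀ y ∈ s, m * (‖A y‖ ^ 2 - 1 + 2 * ε) ≤ t + 2 * ε * n := by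
    intro y hy
    have h1 : t + 2 * ε * n = ∑ y ∈ s, υ y * (‖A y‖ ^ 2 - 1 + 2 * ε) := by
      rw [htr, ← hυsum, Finset.mul_sum, ← Finset.sum_add_distrib]
      refine Finset.sum_congr rfl fun y hy => ?_
      rw [hqy y hy]; ring
    rw [h1]
    have h2 : ∀ z ∈ s, 0 ≤ υ z * (‖A z‖ ^ 2 - 1 + 2 * ε) := fun z hz =>
      mul_nonneg (hυpos z hz).le (by linarith [hq z hz])
    refine le_trans ?_ (Finset.single_le_sum h2 hy)
    exact mul_le_mul_of_nonneg_right (hmle y hy) (by linarith [hq y hy])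
  have hμb : μ ≤ a * μ ^ 2 + b * ε := by
    have h1 := hperf M hMsym ((2 * n * μ ^ 2 + 2 * ε * n) / m + 2 * ε) (by positivity) (by
      intro y hy
      have h1 := hqy y hy
      have h2 := hub y hy
      have h3 := hq y hy
      have h5 : (0 : ℝ) ≤ (2 * n * μ ^ 2 + 2 * ε * n) / m := by positivity
      have h4 : ‖A y‖ ^ 2 - 1 + 2 * ε ≤ (2 * n * μ ^ 2 + 2 * ε * n) / m := by
        rw [le_div_iff₀ hm]; linarith
      change |⟪y, M.toLinearMap y⟫| ≤ _
      rw [h1, abs_le]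
      constructor <;> linarith)
    calc μ ≤ _ := h1
      _ = a * μ ^ 2 + b * ε := by rw [ha, hb]; field_simp; ring
  have hμε : μ ≤ 2 * b * ε := by nlinarith
  obtain ⟨x, hxs, hxy⟩ := hx
  obtain ⟨ω, hω1, hω0, -, -, hωid⟩ := hred x hxs
  have ht0 : 0 ≤ t := by
    have h1 := eut_trace s ω (fun y hy => hω0 y (fun h => hy (by simpa using h.1))) hωid
      M.toLinearMap
    rw [ht, h1]
    refine Finset.sum_nonneg fun y hy => ?_
    rw [hqy y hy]
    by_cases hyx : y = x ∨ y = -x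
    · rw [hω0 y (fun h => h.2 (by simpa using hyx)), zero_mul]
    · push Not at hyx
      refine mul_nonneg (hω1 y ⟨by simpa using hy, by simpa using hyx⟩) ?_
      linarith [hxy y hy hyx.1 hyx.2]
  have h9 : μ ^ 2 ≤ (2 * b * ε) ^ 2 := by gcongr
  have h10 := Real.log_le_sub_one_of_pos hdd
  have h11 : LinearMap.det A.toLinearMap ^ 2 ≤ |LinearMap.det A.toLinearMap| := by
    rw [← sq_abs]
    nlinarith [abs_nonneg (LinearMap.det A.toLinearMap)]
  have h12 : (2 * n * μ ^ 2 : ℝ) ≤ 2 * n * (2 * b * ε) ^ 2 := by gcongr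
  have h13 : (2 * n * (2 * b * ε) ^ 2 : ℝ) = 8 * n * b ^ 2 * ε ^ 2 := by ring
  have h14 : 0 ≤ ε ^ 2 := sq_nonneg ε
  have h15 : (8 * n * b ^ 2 + 1) * ε ^ 2 = 8 * n * b ^ 2 * ε ^ 2 + ε ^ 2 := by ring
  linarith

/-- The perturbed ball. -/
def bodyK {n : ℕ} (x0 : Euc n) (ε : ℝ) : Set (Euc n) :=
  {y | ‖y‖ ≤ 1 ∧ ‖y‖ ^ 2 + 2 * ε * |⟪x0, y⟫| ≤ 1 + 2 * ε * (19 / 20)}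

theorem bodyK_subset {n : ℕ} (x0 : Euc n) (ε : ℝ) : bodyK x0 ε ⊆ unitBall n := by
  intro y hy
  simpa [unitBall] using hy.1

theorem smul_mem_bodyK {n : ℕ} (x0 : Euc n) (hx0 : ‖x0‖ = 1) (ε : ℝ) (hε : 0 < ε) (hε1 : ε < 1)
    (y : Euc n) (hy : ‖y‖ ≤ 1 - ε) : y ∈ bodyK x0 ε := by
  have h1 := abs_real_inner_le_norm x0 y
  rw [hx0, one_mul] at h1
  refine ⟨by linarith, ?_⟩
  have h2 : ‖y‖ ^ 2 ≤ (1 - ε) ^ 2 := by gcongr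
  have h3 : 2 * ε * |⟪x0, y⟫| ≤ 2 * ε * (1 - ε) := by
    have := h1.trans hy
    gcongr
  nlinarith

theorem bodyK_isSymCB {n : ℕ} (x0 : Euc n) (hx0 : ‖x0‖ = 1) (ε : ℝ) (hε : 0 < ε) (hε1 : ε < 1) :
    IsSymCB (bodyK x0 ε) where
  convex := by
    have h1 : ConvexOn ℝ Set.univ (fun y : Euc n => ‖y‖) := convexOn_univ_norm
    have h2 : ConvexOn ℝ Set.univ (fun y : Euc n => ‖y‖ ^ 2) :=
      h1.pow (fun y _ => norm_nonneg y) 2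
    have h3 : ConvexOn ℝ Set.univ (fun y : Euc n => |⟪x0, y⟫|) := by
      have := (convexOn_univ_norm (E := ℝ)).comp_linearMap (innerₛₗ ℝ x0)
      exact this
    have h4 := h2.add (h3.smul (by positivity : 0 ≤ 2 * ε))
    have h5 := (h1.convex_le 1).inter (h4.convex_le (1 + 2 * ε * (19 / 20)))
    convert h5 using 1
    ext y
    simp [bodyK]
  compact := by
    refine (isCompact_closedBall (0 : Euc n) 1).of_isClosed_subset ?_ (bodyK_subset x0 ε)
    have h1 : IsClosed {y : Euc n | ‖y‖ ≤ 1} := isClosed_le (by fun_prop) (by fun_prop)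
    have h2 : IsClosed {y : Euc n | ‖y‖ ^ 2 + 2 * ε * |⟪x0, y⟫| ≤ 1 + 2 * ε * (19 / 20)} :=
      isClosed_le (by fun_prop) (by fun_prop)
    exact h1.inter h2
  nonempty_interior := by
    refine ⟨0, interior_mono (s := Metric.ball 0 (1 - ε)) ?_ ?_⟩
    · intro y hy
      exact smul_mem_bodyK x0 hx0 ε hε hε1 y (by simpa using (mem_ball_zero_iff.1 hy).le)
    · rw [isOpen_ball.interior_eq]
      simpa using hε1
  symm := by
    ext y
    simp [bodyK]

theorem not_interior_bodyK {n : ℕ} (x0 : Euc n) (hx0 : ‖x0‖ = 1) (ε : ℝ) (hε : 0 < ε)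
    (v : Euc n) (hv : v ∉ interior (bodyK x0 ε)) :
    1 - 2 * ε ≤ ‖v‖ ^ 2 ∧ (‖v‖ < 1 → 19 / 20 < |⟪x0, v⟫|) := by
  by_cases h : ‖v‖ < 1
  · have hge : 1 + 2 * ε * (19 / 20) ≤ ‖v‖ ^ 2 + 2 * ε * |⟪x0, v⟫| := by
      by_contra hlt
      push Not at hlt
      apply hv
      rw [mem_interior]
      refine ⟨{y | ‖y‖ < 1 ∧ ‖y‖ ^ 2 + 2 * ε * |⟪x0, y⟫| < 1 + 2 * ε * (19 / 20)}, ?_, ?_, h, hlt⟩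
      · intro y hy
        exact ⟨hy.1.le, hy.2.le⟩
      · have h1 : IsOpen {y : Euc n | ‖y‖ < 1} := isOpen_lt (by fun_prop) (by fun_prop)
        have h2 : IsOpen {y : Euc n | ‖y‖ ^ 2 + 2 * ε * |⟪x0, y⟫| < 1 + 2 * ε * (19 / 20)} :=
          isOpen_lt (by fun_prop) (by fun_prop)
        exact h1.inter h2
    have h1 := abs_real_inner_le_norm x0 v
    rw [hx0, one_mul] at h1
    have h2 : ‖v‖ ^ 2 < 1 := by nlinarith [norm_nonneg v]
    constructor
    · nlinarith
    · intro _
      by_contra hle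
      push Not at hle
      nlinarith
  · push Not at h
    exact ⟨by nlinarith, fun h' => absurd h' (not_lt.2 h)⟩

theorem hausdorff_bodyK {n : ℕ} (x0 : Euc n) (hx0 : ‖x0‖ = 1) (ε : ℝ) (hε : 0 < ε) (hε1 : ε < 1) :
    Metric.hausdorffDist (bodyK x0 ε) (unitBall n) ≤ ε := by
  refine hausdorffDist_le_of_mem_dist hε.le (fun x hx => ⟨x, bodyK_subset x0 ε hx, by simpa using hε.le⟩)
    fun y hy => ⟨(1 - ε) • y, ?_, ?_⟩
  · have hy1 : ‖y‖ ≤ 1 := by simpa [unitBall] using hy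
    apply smul_mem_bodyK x0 hx0 ε hε hε1
    rw [norm_smul, Real.norm_eq_abs, abs_of_pos (by linarith)]
    nlinarith
  · have hy1 : ‖y‖ ≤ 1 := by simpa [unitBall] using hy
    rw [dist_eq_norm]
    have : y - (1 - ε) • y = ε • y := by rw [sub_smul, one_smul]; abel
    rw [this, norm_smul, Real.norm_eq_abs, abs_of_pos hε]
    nlinarith

/-- A sector of the unit ball. -/
def sector {n : ℕ} (x0 : Euc n) : Set (Euc n) := {y | ‖y‖ ≤ 1 ∧ 39 / 40 * ‖y‖ ≤ ⟪x0, y⟫}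

open scoped Pointwise in
theorem volume_bodyK {n : ℕ} (hn : 2 ≤ n) (x0 : Euc n) (hx0 : ‖x0‖ = 1) :
    ∃ c > (0 : ℝ), ∀ ε, 0 < ε → ε < 1 →
      (volume (bodyK x0 ε)).toReal ≤ (volume (unitBall n)).toReal - c * ε := by
  have hDsub : sector x0 ⊆ unitBall n := fun y hy => by simpa [unitBall] using hy.1
  have hBfin : volume (unitBall n) ≠ ⊤ := (isCompact_closedBall (0 : Euc n) 1).measure_ne_top
  have hDfin : volume (sector x0) ≠ ⊤ := measure_ne_top_of_subset hDsub hBfin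
  have hDclosed : IsClosed (sector x0) := by
    have h1 : IsClosed {y : Euc n | ‖y‖ ≤ 1} := isClosed_le (by fun_prop) (by fun_prop)
    have h2 : IsClosed {y : Euc n | 39 / 40 * ‖y‖ ≤ ⟪x0, y⟫} :=
      isClosed_le (by fun_prop) (by fun_prop)
    exact h1.inter h2
  set w := (volume (sector x0)).toReal with hw
  have hw0 : 0 < w := by
    refine ENNReal.toReal_pos ?_ hDfin
    have hop : IsOpen {y : Euc n | ‖y‖ < 1 ∧ 39 / 40 * ‖y‖ < ⟪x0, y⟫} := by
      have h1 : IsOpen {y : Euc n | ‖y‖ < 1} := isOpen_lt (by fun_prop) (by fun_prop)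
      have h2 : IsOpen {y : Euc n | 39 / 40 * ‖y‖ < ⟪x0, y⟫} :=
        isOpen_lt (by fun_prop) (by fun_prop)
      exact h1.inter h2
    have hne : {y : Euc n | ‖y‖ < 1 ∧ 39 / 40 * ‖y‖ < ⟪x0, y⟫}.Nonempty := by
      refine ⟨(1 / 2 : ℝ) • x0, ?_, ?_⟩
      · rw [norm_smul, hx0]; norm_num
      · rw [norm_smul, hx0, real_inner_smul_right, real_inner_self_eq_norm_sq, hx0]; norm_num
    have hpos := hop.measure_pos volume hne
    have hsub : {y : Euc n | ‖y‖ < 1 ∧ 39 / 40 * ‖y‖ < ⟪x0, y⟫} ⊆ sector x0 :=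
      fun y hy => ⟨hy.1.le, hy.2.le⟩
    exact (hpos.trans_le (measure_mono hsub)).ne'
  refine ⟨w / 60, by positivity, fun ε hε hε1 => ?_⟩
  set r : ℝ := Real.sqrt ((1 + 2 * ε * (19 / 20)) / (1 + 2 * ε * (39 / 40))) with hr
  have hr2 : r ^ 2 = (1 + 2 * ε * (19 / 20)) / (1 + 2 * ε * (39 / 40)) :=
    Real.sq_sqrt (by positivity)
  have hr0 : 0 < r := Real.sqrt_pos.2 (by positivity)
  have hr2le : r ^ 2 ≤ 1 - ε / 60 := by
    rw [hr2, div_le_iff₀ (by positivity)]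
    nlinarith
  have hr1 : r ≤ 1 := by
    by_contra h
    push Not at h
    nlinarith
  have hrn : r ^ n ≤ 1 - ε / 60 := (pow_le_pow_of_le_one hr0.le hr1 hn).trans hr2le
  set D' : Set (Euc n) := r • sector x0 with hD'
  have hmemD' : ∀ y, y ∈ D' ↔ ‖y‖ ≤ r ∧ 39 / 40 * ‖y‖ ≤ ⟪x0, y⟫ := by
    intro y
    rw [hD', Set.mem_smul_set_iff_inv_smul_mem₀ hr0.ne']
    simp only [sector, Set.mem_ofPred_eq, norm_smul, real_inner_smul_right, norm_inv,
      Real.norm_eq_abs, abs_of_pos hr0]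
    rw [inv_mul_le_iff₀ hr0, mul_one]
    refine and_congr_right fun _ => ?_
    rw [← mul_assoc, mul_comm (39 / 40) r⁻¹, mul_assoc]
    exact mul_le_mul_iff_right₀ (inv_pos.2 hr0)
  have hD'sub : D' ⊆ sector x0 := fun y hy => by
    have := (hmemD' y).1 hy
    exact ⟨this.1.trans hr1, this.2⟩
  have hD'vol : (volume D').toReal = r ^ n * w := by
    rw [hD', Measure.addHaar_smul]
    simp [abs_of_pos hr0, hw, ENNReal.toReal_mul, hr0.le]
  have hD'closed : IsClosed D' := hDclosed.smul₀ r
  have hKsub : bodyK x0 ε ⊆ unitBall n \ (sector x0 \ D') := by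
    intro y hy
    refine ⟨bodyK_subset x0 ε hy, fun ⟨hyD, hyD'⟩ => ?_⟩
    have h1 : r < ‖y‖ := by
      by_contra h
      push Not at h
      exact hyD' ((hmemD' y).2 ⟨h, hyD.2⟩)
    have h2 := hy.2
    have h3 := hyD.2
    have h4 := hyD.1
    have h5 : ⟪x0, y⟫ ≤ |⟪x0, y⟫| := le_abs_self _
    have h6 : r ^ 2 < ‖y‖ ^ 2 := by gcongr
    rw [hr2, div_lt_iff₀ (by positivity)] at h6
    have h7 : ‖y‖ ^ 2 ≤ ‖y‖ := by nlinarith [norm_nonneg y]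
    have h8 : 39 / 40 * ‖y‖ ^ 2 ≤ |⟪x0, y⟫| := by linarith
    have h9 := mul_le_mul_of_nonneg_left h8 (by positivity : 0 ≤ 2 * ε)
    linarith
  have hm1 : volume.real (bodyK x0 ε) ≤ volume.real (unitBall n \ (sector x0 \ D')) :=
    measureReal_mono hKsub (measure_ne_top_of_subset Set.sdiff_subset hBfin)
  have hm2 : volume.real (unitBall n \ (sector x0 \ D')) =
      volume.real (unitBall n) - volume.real (sector x0 \ D') :=
    measureReal_sdiff (Set.sdiff_subset.trans hDsub)
      (hDclosed.measurableSet.diff hD'closed.measurableSet) hBfin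
  have hm3 : volume.real (sector x0 \ D') = volume.real (sector x0) - volume.real D' :=
    measureReal_sdiff hD'sub hD'closed.measurableSet hDfin
  rw [hm2, hm3] at hm1
  simp only [Measure.real] at hm1
  rw [hD'vol, ← hw] at hm1
  have : r ^ n * w ≤ (1 - ε / 60) * w := by gcongr
  linarith

theorem abs_det_isometry {n : ℕ} (U : Euc n ≃ₗᵢ[ℝ] Euc n) :
    |LinearMap.det (U.toLinearEquiv : Euc n →ₗ[ℝ] Euc n)| = 1 := by
  have h1 := LinearIsometry.normDet_eq_one U.toLinearIsometry
  rw [LinearMap.normDet_eq_norm_det] at h1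
  exact h1

theorem near_of_inner {n : ℕ} (x0 p : Euc n) (hx0 : ‖x0‖ = 1) (hp : ‖p‖ < 1)
    (h : 19 / 20 < |⟪x0, p⟫|) : ∃ σ : ℝ, (σ = 1 ∨ σ = -1) ∧ ‖x0 - σ • p‖ ^ 2 < 1 / 10 := by
  have key : ∀ q : Euc n, ‖q‖ < 1 → 19 / 20 < ⟪x0, q⟫ → ‖x0 - q‖ ^ 2 < 1 / 10 := by
    intro q hq hi
    rw [norm_sub_sq_real, hx0]
    nlinarith [norm_nonneg q]
  rcases lt_abs.1 h with h | h
  · exact ⟨1, Or.inl rfl, by simpa using key p hp h⟩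
  · exact ⟨-1, Or.inr rfl, key _ (by simpa using hp) (by simpa using h)⟩

theorem two_near {n : ℕ} (x0 p q : Euc n) (hp : ‖x0 - p‖ ^ 2 < 1 / 10)
    (hq : ‖x0 - q‖ ^ 2 < 1 / 10) : ‖p - q‖ < 9 / 10 := by
  have h1 : ‖x0 - p‖ < 2 / 5 := by nlinarith [norm_nonneg (x0 - p)]
  have h2 : ‖x0 - q‖ < 2 / 5 := by nlinarith [norm_nonneg (x0 - q)]
  have h3 : p - q = (x0 - q) - (x0 - p) := by abel
  rw [h3]
  have := norm_sub_le (x0 - q) (x0 - p)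
  linarith

theorem norm_near_id {n : ℕ} (A : Euc n →L[ℝ] Euc n) (hA : ‖A - 1‖ ≤ 1 / 100) (z : Euc n) :
    99 / 100 * ‖z‖ ≤ ‖A z‖ := by
  have h1 : ‖(A - 1) z‖ ≤ 1 / 100 * ‖z‖ :=
    ((A - 1).le_opNorm z).trans (by gcongr)
  have h2 : z = A z - (A - 1) z := by simp
  have h3 := norm_sub_le (A z) ((A - 1) z)
  rw [← h2] at h3
  linarith

/-- Lower bound for the critical determinant of the perturbed body. -/
theorem critDet_bodyK_ge {n : ℕ} (T0 : Euc n →ₗ[ℝ] Euc n) (hT0 : LinearMap.det T0 ≠ 0)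
    (hd : critDet (unitBall n) = |LinearMap.det T0|)
    (hadm : ∀ v ∈ latticeSet T0, v ≠ 0 → 1 ≤ ‖v‖)
    (huniq : ∀ Λ' : Set (Euc n), IsCriticalLattice Λ' (unitBall n) →
      ∃ U : Euc n ≃ₗᵢ[ℝ] Euc n, Λ' = ⇑U '' latticeSet T0)
    (s : Finset (Euc n)) (hs : ∀ y ∈ s, y ∈ latticeSet T0) (hsne : s.Nonempty)
    (hunit : ∀ y ∈ s, ‖y‖ = 1)
    (hext : IsExtremeCfg (s : Set (Euc n)))
    (hred : ∀ x ∈ s, IsSemiEutacticCfg ((s : Set (Euc n)) \ {x, -x}))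
    (x0 : Euc n) (hx0 : ‖x0‖ = 1) :
    ∃ C > (0 : ℝ), ∃ ε0 > (0 : ℝ), ∀ ε, 0 < ε → ε ≤ ε0 →
      (1 - C * ε ^ 2) * critDet (unitBall n) ≤ critDet (bodyK x0 ε) := by
  have hd0 : 0 < |LinearMap.det T0| := abs_pos.2 hT0
  obtain ⟨C, hC, η, hη, hη1, hloc⟩ := local_estimate s hunit hext hred
  obtain ⟨ε0, hε0, hnear⟩ := near_critical T0 hT0 (hd ▸ hd0) huniq η hη
  refine ⟨C, hC, ε0, hε0, fun ε hε hεle => ?_⟩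
  refine le_csInf ?_ ?_
  · refine ⟨_, latticeSet T0, ⟨T0, hT0, rfl⟩, ?_, rfl⟩
    have h1 : IsAdmissible (latticeSet T0) (unitBall n) := (admissible_ball_iff _).2 hadm
    exact (Set.inter_subset_inter_right _ (interior_mono (bodyK_subset x0 ε))).trans h1
  rintro _ ⟨_, ⟨T, hT, rfl⟩, hTadm, rfl⟩
  rw [latDet_eq T hT]
  by_cases hle : critDet (unitBall n) ≤ |LinearMap.det T|
  · refine le_trans ?_ hle
    have : 0 ≤ C * ε ^ 2 * critDet (unitBall n) := by rw [hd]; positivity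
    linarith
  push Not at hle
  have hv : ∀ v ∈ latticeSet T, v ≠ 0 →
      1 - 2 * ε ≤ ‖v‖ ^ 2 ∧ (‖v‖ < 1 → 19 / 20 < |⟪x0, v⟫|) := fun v hv hv0 =>
    not_interior_bodyK x0 hx0 ε hε v fun hi => hv0 (hTadm ⟨hv, hi⟩)
  obtain ⟨U, A, hA, hTA⟩ := hnear ε hε hεle T hT (fun v h1 h2 => (hv v h1 h2).1) hle.le
  have hA1 := norm_near_id A (hA.trans hη1)
  have hmem : ∀ y ∈ latticeSet T0, U (A y) ∈ latticeSet T := fun y hy => by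
    rw [hTA]; exact ⟨y, hy, rfl⟩
  have hyA : ∀ y ∈ s, 1 - 2 * ε ≤ ‖A y‖ ^ 2 ∧ (‖A y‖ < 1 → 19 / 20 < |⟪x0, U (A y)⟫|) := by
    intro y hy
    have h1 : U (A y) ≠ 0 := by
      rw [← norm_pos_iff, LinearIsometryEquiv.norm_map]
      have := hA1 y
      rw [hunit y hy] at this
      linarith
    have := hv _ (hmem y (hs y hy)) h1
    rwa [LinearIsometryEquiv.norm_map] at this
  have hlat : latticeSet T =
      latticeSet ((U.toLinearEquiv : Euc n →ₗ[ℝ] Euc n) ∘ₗ (A.toLinearMap ∘ₗ T0)) := by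
    rw [latticeSet_comp, latticeSet_comp, Set.image_image, hTA]
    rfl
  have hdet := abs_det_eq T _ hT hlat
  rw [LinearMap.det_comp, LinearMap.det_comp, abs_mul, abs_mul, abs_det_isometry, one_mul] at hdet
  have hAdet0 : LinearMap.det A.toLinearMap ≠ 0 := by
    intro h0
    rw [h0, abs_zero, zero_mul] at hdet
    exact hT (abs_eq_zero.1 hdet.symm)
  have hAdet1 : |LinearMap.det A.toLinearMap| ≤ 1 := by
    rw [hd, ← hdet] at hle
    by_contra hcon
    push Not at hcon
    nlinarith
  have hfin := hloc A ε hε hA (fun y hy => (hyA y hy).1) ?_ hAdet0 hAdet1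
  · rw [hd, ← hdet]
    gcongr
  by_cases hbad : ∃ x ∈ s, ‖A x‖ < 1
  · obtain ⟨x, hx, hxA⟩ := hbad
    refine ⟨x, hx, fun y hy hyx hyx' => ?_⟩
    by_contra hcon
    have hyA1 : ‖A y‖ < 1 := by
      by_contra h
      push Not at h
      exact hcon (by nlinarith)
    obtain ⟨σ, hσ, hσ'⟩ := near_of_inner x0 (U (A x)) hx0 (by simpa using hxA) ((hyA x hx).2 hxA)
    obtain ⟨τ, hτ, hτ'⟩ := near_of_inner x0 (U (A y)) hx0 (by simpa using hyA1) ((hyA y hy).2 hyA1)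
    have h1 := two_near x0 _ _ hσ' hτ'
    have h2 : σ • U (A x) - τ • U (A y) = U (A (σ • x - τ • y)) := by simp
    rw [h2, LinearIsometryEquiv.norm_map] at h1
    have h3 := hA1 (σ • x - τ • y)
    have hm : ∀ ρ : ℝ, (ρ = 1 ∨ ρ = -1) → ∀ z ∈ s, ρ • z ∈ latticeSet T0 := by
      rintro ρ (rfl | rfl) z hz
      · simpa using hs z hz
      · simpa using neg_mem_latticeSet T0 (hs z hz)
    have h4 : σ • x - τ • y ≠ 0 := by
      intro h0
      rw [sub_eq_zero] at h0
      rcases hσ with rfl | rfl <;> rcases hτ with rfl | rfl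
      · exact hyx (by simpa using h0.symm)
      · exact hyx' (by simpa using (congrArg Neg.neg h0).symm)
      · exact hyx' (by simpa using h0.symm)
      · exact hyx (by simpa using h0.symm)
    have h5 := hadm _ (sub_mem_latticeSet T0 (hm σ hσ x hx) (hm τ hτ y hy)) h4
    linarith
  · push Not at hbad
    obtain ⟨x, hx⟩ := hsne
    exact ⟨x, hx, fun y hy _ _ => by nlinarith [hbad y hy]⟩


/-- Theorem 3.6: if the critical lattice `Λ` of `Bⁿ` is unique up to
rotation and `S(Λ)` is redundantly semi-eutactic, then `Bⁿ` is not a local pessimum for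
lattice packing. -/
theorem redundantly_semiEutactic_not_local_pessimum (n : ℕ) (hn : 2 ≤ n) (Λ : Set (Euc n))
    (hcrit : IsCriticalLattice Λ (unitBall n))
    (huniq : ∀ Λ' : Set (Euc n), IsCriticalLattice Λ' (unitBall n) →
      ∃ U : Euc n ≃ₗᵢ[ℝ] Euc n, Λ' = ⇑U '' Λ)
    (hext : IsExtremeCfg (minVecs Λ))
    (hredsemi : ∀ x ∈ minVecs Λ, IsSemiEutacticCfg (minVecs Λ \ {x, -x})) :
    ∀ ε > (0 : ℝ), ∃ K : Set (Euc n), IsSymCB K ∧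
      Metric.hausdorffDist K (unitBall n) < ε ∧
      packFrac K < packFrac (unitBall n) := by
  intro ε' hε'
  obtain ⟨⟨T0, hT0, rfl⟩, hadm', hcd⟩ := hcrit
  have hadm := (admissible_ball_iff _).1 hadm'
  rw [latDet_eq T0 hT0] at hcd
  have hd0 : 0 < |LinearMap.det T0| := abs_pos.2 hT0
  have hd0' : 0 < critDet (unitBall n) := hcd ▸ hd0
  have hSfin : (minVecs (latticeSet T0)).Finite := by
    obtain ⟨υ, hpos, -, hfin, -⟩ := hext.2
    exact hfin.subset fun x hx => (hpos x hx).ne'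
  obtain ⟨s, hs⟩ := hSfin.exists_finset_coe
  have hsmem : ∀ y ∈ s, y ∈ minVecs (latticeSet T0) := fun y hy => by
    rw [← hs]; exact hy
  have hunit : ∀ y ∈ s, ‖y‖ = 1 := by
    intro y hy
    obtain ⟨hyL, hy0, hyn⟩ := hsmem y hy
    have h1 := hadm y hyL hy0
    have h2 : ∀ v ∈ latticeSet T0, v ≠ 0 → ‖y‖ ≤ ‖v‖ := by
      intro v hv hv0
      have h3 : minNorm (latticeSet T0) ≤ ‖v‖ ^ 2 := by
        refine csInf_le ⟨0, ?_⟩ ⟨v, hv, hv0, rfl⟩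
        rintro _ ⟨x, -, -, rfl⟩
        positivity
      rw [← hyn] at h3
      exact le_of_sq_le_sq h3 (norm_nonneg v)
    have h3 := critDet_le_scaled T0 hT0 ‖y‖ (by linarith) h2
    rw [hcd] at h3
    have h4 : ‖y‖ ≤ ‖y‖ ^ n := le_self_pow₀ h1 (by omega)
    nlinarith
  rw [← hs] at hext hredsemi
  have hsne : s.Nonempty := by
    rw [Finset.nonempty_iff_ne_empty]
    intro h0
    obtain ⟨υ, -, hυ, -, -, hid⟩ := hext.2
    have h1 := eut_trace s υ (fun x hx => hυ x (by simpa using hx)) hid LinearMap.id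
    rw [h0, Finset.sum_empty, LinearMap.trace_id] at h1
    simp at h1
    omega
  set x0 : Euc n := EuclideanSpace.single ⟨0, by omega⟩ 1 with hx0def
  have hx0 : ‖x0‖ = 1 := by simp [hx0def]
  obtain ⟨C, hC, ε0, hε0, hdet⟩ := critDet_bodyK_ge T0 hT0 hcd.symm hadm huniq s
    (fun y hy => (hsmem y hy).1) hsne hunit hext (fun x hx => hredsemi x (by simpa using hx)) x0 hx0
  obtain ⟨c, hc, hvol⟩ := volume_bodyK hn x0 hx0
  set V := (volume (unitBall n)).toReal with hV
  have hV0 : 0 ≤ V := ENNReal.toReal_nonneg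
  obtain ⟨ε, hε, h1, h2, h3, h4, h5⟩ : ∃ ε : ℝ, 0 < ε ∧ ε < ε' ∧ ε ≤ ε0 ∧ ε < 1 ∧
      C * ε < 1 ∧ V * C * ε < c := by
    refine ⟨min (min (ε' / 2) ε0) (min (1 / 2) (min (1 / (2 * C)) (c / (V * C + 1)))), ?_,
      ?_, ?_, ?_, ?_, ?_⟩
    · positivity
    · exact ((min_le_left _ _).trans (min_le_left _ _)).trans_lt (by linarith)
    · exact (min_le_left _ _).trans (min_le_right _ _)
    · exact ((min_le_right _ _).trans (min_le_left _ _)).trans_lt (by norm_num)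
    · refine (mul_le_mul_of_nonneg_left ((min_le_right _ _).trans
        ((min_le_right _ _).trans (min_le_left _ _))) hC.le).trans_lt ?_
      field_simp
      norm_num
    · refine (mul_le_mul_of_nonneg_left ((min_le_right _ _).trans
        ((min_le_right _ _).trans (min_le_right _ _))) (by positivity)).trans_lt ?_
      rw [← mul_div_assoc, div_lt_iff₀ (by positivity)]
      linarith
  refine ⟨bodyK x0 ε, bodyK_isSymCB x0 hx0 ε hε h3,
    (hausdorff_bodyK x0 hx0 ε hε h3).trans_lt h1, ?_⟩
  have hv := hvol ε hε h3
  have hD := hdet ε hε h2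
  have hq : 0 < 1 - C * ε ^ 2 := by nlinarith
  have hDpos : 0 < critDet (bodyK x0 ε) := lt_of_lt_of_le (by positivity) hD
  unfold packFrac
  rw [div_lt_div_iff₀ (by positivity) (by positivity), ← hV]
  have hk : (volume (bodyK x0 ε)).toReal < V * (1 - C * ε ^ 2) := by
    have := mul_lt_mul_of_pos_right h5 hε
    nlinarith
  calc (volume (bodyK x0 ε)).toReal * (2 ^ n * critDet (unitBall n))
      < V * (1 - C * ε ^ 2) * (2 ^ n * critDet (unitBall n)) := by gcongr
    _ = V * (2 ^ n * ((1 - C * ε ^ 2) * critDet (unitBall n))) := by ring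
    _ ≤ V * (2 ^ n * critDet (bodyK x0 ε)) := by gcongr

end
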